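/- Let 0 < q ≤ 1, η > 0, θ ≥ 0, τ ≥ 0 and fix s > 0. Define β_{n,k}(x,s) by β_{n,k} = 0 for n < 0 or k > n, β_{n,0}(x,s) = p_n(x;s), and the recurrence [k+1]_q β_{n,k+1}(x,s) = q^k [n−k]_q β_{n,k}(x,s) + [n]_q β_{n−1,k}(x,s). Then for all integers 0 ≤ j < k ≤ n one has β_{n,k}(x_j(s), s) = 0. -/

import Mathlib

/-- `[n]_q = 1 + q + ⋯ + q^{n-1}`. -/
noncomputable def qnum (q : ℝ) (n : ℕ) : ℝ := ∑ i ∈ Finset.range n, q ^ i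

/-- `[n]_q! = [1]_q [2]_q ⋯ [n]_q`. -/
noncomputable def qfact (q : ℝ) (n : ℕ) : ℝ := ∏ i ∈ Finset.range n, qnum q (i + 1)

/-- q-binomial coefficient `[n choose k]_q`, with the convention that it is `0` for `k > n`. -/
noncomputable def qbinom (q : ℝ) (n k : ℕ) : ℝ :=
  if k ≤ n then qfact q n / (qfact q (n - k) * qfact q k) else 0

/-- `a_n = η⁻¹ + θ[n]_q + [n]_q² ητ`. -/
noncomputable def aCoef (η θ τ q : ℝ) (n : ℕ) : ℝ :=
  η⁻¹ + θ * qnum q n + (qnum q n) ^ 2 * η * τ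

/-- `b_n(t) = (tη + θ + ([n]_q + [n-1]_q)ητ)[n]_q`. -/
noncomputable def bCoef (η θ τ q t : ℝ) (n : ℕ) : ℝ :=
  (t * η + θ + (qnum q n + qnum q (n - 1)) * η * τ) * qnum q n

/-- `c_n(t) = η(t + τ[n-1]_q)[n]_q`. -/
noncomputable def cCoef (η τ q t : ℝ) (n : ℕ) : ℝ :=
  η * (t + τ * qnum q (n - 1)) * qnum q n

/-- `A_n(x,s) = a_n + q^n x - sη q^n [n]_q`. -/
noncomputable def ACoef (η θ τ q x s : ℝ) (n : ℕ) : ℝ :=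
  aCoef η θ τ q n + q ^ n * x - s * η * q ^ n * qnum q n

/-- `x_k(s) = ((sη q^k - θ)[k]_q - η⁻¹ - ητ[k]_q²)/q^k`, the zero of `x ↦ A_k(x,s)`. -/
noncomputable def xPt (η θ τ q s : ℝ) (k : ℕ) : ℝ :=
  ((s * η * q ^ k - θ) * qnum q k - η⁻¹ - η * τ * (qnum q k) ^ 2) / q ^ k

/-- `[n]_q` for an integer index, with value `0` for negative indices. -/
noncomputable def qnumZ (q : ℝ) (n : ℤ) : ℝ :=
  if 0 ≤ n then ∑ i ∈ Finset.range n.toNat, q ^ i else 0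

theorem qnum_zero' (q : ℝ) : qnum q 0 = 0 := by simp [qnum]

theorem qnum_succ' (q : ℝ) (n : ℕ) : qnum q (n + 1) = qnum q n + q ^ n := by
  simp [qnum, Finset.sum_range_succ]

theorem qpow_eq (q : ℝ) (n : ℕ) : q ^ n = 1 + qnum q n * (q - 1) := by
  induction n with
  | zero => simp [qnum_zero']
  | succ n ih => rw [qnum_succ', pow_succ]; linear_combination ih

theorem qnum_add' (q : ℝ) (k i : ℕ) :
    qnum q (k + i) = qnum q k + (1 + qnum q k * (q - 1)) * qnum q i := by
  induction i with
  | zero => simp [qnum_zero']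
  | succ n ih =>
    rw [← add_assoc, qnum_succ', qnum_succ', ih, pow_add, qpow_eq q k]; ring

theorem qnum_nonneg' (q : ℝ) (hq : 0 < q) (n : ℕ) : 0 ≤ qnum q n := by
  unfold qnum; positivity

theorem qnum_pos' (q : ℝ) (hq : 0 < q) (n : ℕ) : 0 < qnum q (n + 1) := by
  rw [qnum_succ']; have := qnum_nonneg' q hq n; positivity

theorem qfact_succ' (q : ℝ) (n : ℕ) : qfact q (n + 1) = qfact q n * qnum q (n + 1) := by
  simp [qfact, Finset.prod_range_succ]

theorem qfact_pos' (q : ℝ) (hq : 0 < q) (n : ℕ) : 0 < qfact q n :=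
  Finset.prod_pos fun i _ => qnum_pos' q hq i

theorem qnumZ_nat (q : ℝ) (n : ℕ) : qnumZ q (n : ℤ) = qnum q n := by
  simp [qnumZ, qnum]

theorem aCoef_pos' (η θ τ q : ℝ) (hq0 : 0 < q) (hη : 0 < η) (hθ : 0 ≤ θ) (hτ : 0 ≤ τ) (n : ℕ) :
    0 < aCoef η θ τ q n := by
  have := qnum_nonneg' q hq0 n
  unfold aCoef; positivity

/-- `redB k i` is `β_{k+i,k}` divided by the q-binomial coefficient. -/
noncomputable def redB (q : ℝ) (f : ℕ → ℝ) : ℕ → ℕ → ℝ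
  | 0, i => f i
  | k + 1, i => q ^ k * redB q f k (i + 1) + redB q f k i

/-- the three-term recurrence of `redB`. -/
theorem redB_rec (η θ τ q s x : ℝ) (f : ℕ → ℝ)
    (hf : ∀ n : ℕ, x * f n =
      aCoef η θ τ q n * f (n + 1) + bCoef η θ τ q s n * f n + cCoef η τ q s n * f (n - 1))
    (k : ℕ) :
    (aCoef η θ τ q k * redB q f k 1 + (s * η * qnum q k - x) * redB q f k 0 = 0) ∧
    ∀ i : ℕ, aCoef η θ τ q (k + i + 1) * redB q f k (i + 2)
      + (s * η * qnum q (k + i + 1)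
          + qnum q (i + 1) * (θ + (qnum q (k + i + 1) + qnum q (k + i)) * η * τ) - x)
        * redB q f k (i + 1)
      + η * (s + τ * qnum q i) * qnum q (i + 1) * redB q f k i = 0 := by
  induction k with
  | zero =>
    refine ⟨?_, fun i => ?_⟩
    · have := hf 0
      simp only [bCoef, cCoef, qnum_zero', redB, zero_add] at this ⊢
      linear_combination -this
    · have := hf (i + 1)
      simp only [bCoef, cCoef, redB, zero_add, Nat.add_sub_cancel] at this ⊢
      linear_combination -this
  | succ k ih =>
    obtain ⟨h0, h⟩ := ih
    refine ⟨?_, fun i => ?_⟩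
    · have h1 := h 0
      simp only [redB, aCoef, qnum_add', qnum_succ', qpow_eq q, qnum_zero', zero_add, add_zero]
        at h0 h1 ⊢
      linear_combination (1 + qnum q k * (q - 1)) * h1 + h0
    · have h1 := h i
      have h2 := h (i + 1)
      have e : k + 1 + i = k + i + 1 := by ring
      rw [e]
      rw [← add_assoc] at h2
      simp only [redB, aCoef, qnum_add', qnum_succ', qpow_eq q, qnum_zero', zero_add, add_zero]
        at h1 h2 ⊢
      linear_combination (1 + qnum q k * (q - 1)) * h2 + h1

theorem redB_zero (η θ τ q s : ℝ)
    (hq0 : 0 < q) (hη : 0 < η) (hθ : 0 ≤ θ) (hτ : 0 ≤ τ) (f : ℕ → ℝ) (j : ℕ)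
    (hf : ∀ n : ℕ, xPt η θ τ q s j * f n =
      aCoef η θ τ q n * f (n + 1) + bCoef η θ τ q s n * f n + cCoef η τ q s n * f (n - 1))
    (i : ℕ) : redB q f (j + 1) i = 0 := by
  have hx : q ^ j * xPt η θ τ q s j =
      (s * η * q ^ j - θ) * qnum q j - η⁻¹ - η * τ * (qnum q j) ^ 2 := by
    unfold xPt; field_simp
  generalize xPt η θ τ q s j = x at hf hx
  obtain ⟨h0, h⟩ := redB_rec η θ τ q s x f hf j
  induction i with
  | zero =>
    apply (mul_eq_zero.1 (?_ : aCoef η θ τ q j * redB q f (j + 1) 0 = 0)).resolve_left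
      (aCoef_pos' η θ τ q hq0 hη hθ hτ j).ne'
    simp only [redB, zero_add]
    unfold aCoef at *
    linear_combination q ^ j * h0 + redB q f j 0 * hx
  | succ i ih =>
    apply (mul_eq_zero.1
      (?_ : aCoef η θ τ q (j + i + 1) * redB q f (j + 1) (i + 1) = 0)).resolve_left
      (aCoef_pos' η θ τ q hq0 hη hθ hτ _).ne'
    have h1 := h i
    simp only [redB] at ih ⊢
    simp only [aCoef, qnum_add', qnum_succ', qpow_eq q] at h1 hx ih ⊢
    linear_combination (1 + qnum q j * (q - 1)) * h1 + redB q f j (i + 1) * hx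
      - (1 + qnum q j * (q - 1)) * (η * (s + τ * qnum q i) * (qnum q i + (1 + qnum q i * (q - 1)))) * ih

theorem redB_zero_of_lt (q : ℝ) (f : ℕ → ℝ) (j : ℕ) (h : ∀ i, redB q f (j + 1) i = 0) (d : ℕ) :
    ∀ i, redB q f (j + 1 + d) i = 0 := by
  induction d with
  | zero => exact h
  | succ d ih => intro i; rw [← add_assoc, redB, ih, ih]; ring

/-- for `0 < q ≤ 1`, `η > 0`, `θ ≥ 0`, `τ ≥ 0`, `s > 0`, define `β_{n,k}(x,s)` by
`β_{n,k} = 0` for `n < 0` or `k > n`, `β_{n,0}(x,s) = p_n(x;s)`, and the recurrence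
`[k+1]_q β_{n,k+1} = q^k [n-k]_q β_{n,k} + [n]_q β_{n-1,k}`.  Then `β_{n,k}(x_j(s),s) = 0`
whenever `0 ≤ j < k ≤ n`. -/
theorem stmt4 (η θ τ q s : ℝ)
    (hq0 : 0 < q) (hq1 : q ≤ 1) (hη : 0 < η) (hθ : 0 ≤ θ) (hτ : 0 ≤ τ) (hs : 0 < s)
    (p : ℕ → ℝ → ℝ)
    (hp0 : ∀ y : ℝ, p 0 y = 1)
    (hprec : ∀ (n : ℕ) (y : ℝ), y * p n y =
      aCoef η θ τ q n * p (n + 1) y + bCoef η θ τ q s n * p n y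
        + cCoef η τ q s n * p (n - 1) y)
    (β : ℝ → ℤ → ℤ → ℝ)
    (hzero : ∀ (x : ℝ) (n k : ℤ), n < 0 ∨ n < k → β x n k = 0)
    (hinit : ∀ (x : ℝ) (n : ℕ), β x n 0 = p n x)
    (hrec : ∀ (x : ℝ) (n k : ℤ), 0 ≤ n → 0 ≤ k →
      qnumZ q (k + 1) * β x n (k + 1) =
        q ^ k * qnumZ q (n - k) * β x n k + qnumZ q n * β x (n - 1) k) :
    ∀ j k n : ℕ, j < k → k ≤ n → β (xPt η θ τ q s j) n k = 0 := by
  intro j k n hjk hkn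
  set x := xPt η θ τ q s j with hxdef
  have key : ∀ k i : ℕ, qfact q k * qfact q i * β x ((k + i : ℕ) : ℤ) (k : ℤ)
      = qfact q (k + i) * redB q (fun n => p n x) k i := by
    intro k
    induction k with
    | zero =>
      intro i
      have := hinit x i
      simp [redB, this, qfact]
    | succ k ih =>
      intro i
      have h := hrec x ((k + i + 1 : ℕ) : ℤ) (k : ℤ) (by positivity) (by positivity)
      have e1 : ((k : ℤ) + 1) = ((k + 1 : ℕ) : ℤ) := by push_cast; ring
      have e2 : ((k + i + 1 : ℕ) : ℤ) - (k : ℤ) = ((i + 1 : ℕ) : ℤ) := by push_cast; ring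
      have e3 : ((k + i + 1 : ℕ) : ℤ) - 1 = ((k + i : ℕ) : ℤ) := by push_cast; ring
      rw [e1, e2, e3, qnumZ_nat, qnumZ_nat, qnumZ_nat, zpow_natCast] at h
      have i1 := ih i
      have i2 := ih (i + 1)
      have e4 : k + 1 + i = k + i + 1 := by ring
      rw [← add_assoc] at i2
      rw [e4, redB]
      rw [qfact_succ' q i] at i2
      rw [qfact_succ' q k]
      rw [qfact_succ' q (k + i)] at i2 ⊢
      linear_combination qfact q k * qfact q i * h + q ^ k * i2 + qnum q (k + i + 1) * i1
  obtain ⟨i, rfl⟩ := Nat.exists_eq_add_of_le hkn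
  obtain ⟨d, rfl⟩ := Nat.exists_eq_add_of_le (Nat.succ_le_of_lt hjk)
  have hz := redB_zero_of_lt q (fun n => p n x) j
    (redB_zero η θ τ q s hq0 hη hθ hτ (fun n => p n x) j (fun n => hprec n x)) d i
  have hk := key (j + 1 + d) i
  rw [hz, mul_zero] at hk
  exact (mul_eq_zero.1 hk).resolve_left
    (mul_pos (qfact_pos' q hq0 _) (qfact_pos' q hq0 _)).ne'
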